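/- Covariance domination for Gaussian measures: if X₁ and X₂ are centered E-valued Gaussian random variables with E⟨X₁,x*⟩² ≤ E⟨X₂,x*⟩² for all x* ∈ E*, then for every closed convex symmetric set C ⊆ E, P{X₁ ∉ C} ≤ P{X₂ ∉ C}. -/

import Mathlib

open MeasureTheory ProbabilityTheory NNReal

/-!
The covariance condition says that, on a Euclidean space, the centered Gaussian measure `ν` with the
larger covariance is a convolution `ρ ∗ μ` of the one with the smaller covariance. Hence `ν B` is an
average of `μ (B - z)` over `z`, and Anderson's inequality `μ (B - z) ≤ μ B` for symmetric convex
`B` gives `ν B ≤ μ B`. Anderson's inequality is the Prékopa–Leindler inequality for `μ` applied to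
the indicators of `B - z` and `B + z`, which have the same measure and whose midpoints lie in `B`.
The Prékopa–Leindler inequality reduces to that for Lebesgue measure on the line, because it is
stable under log-concave densities, products and affine maps.

In infinite dimension, the two random variables almost surely take values in a separable set. On
such a set, Hahn–Banach separation and the Lindelöf property exhibit a closed convex symmetric set
as a countable intersection of slabs `{x | |φ x| ≤ c}`, and finitely many slabs only involve a
finite-dimensional marginal.
-/

open Filter TopologicalSpace
open scoped ENNReal Topology

section PrekopaLeindlerReal

open scoped Pointwise

lemma volume_add_volume_le_volume_add_of_isCompact {K L : Set ℝ} (hK : IsCompact K)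
    (hL : IsCompact L) (hK₀ : K.Nonempty) (hL₀ : L.Nonempty) :
    volume K + volume L ≤ volume (K + L) := by
  obtain ⟨k, hkK, hk⟩ := hK.exists_isGreatest hK₀
  obtain ⟨l, hlL, hl⟩ := hL.exists_isLeast hL₀
  have hKl : volume (K + {l}) = volume K := by
    simp only [Set.add_singleton, Set.image_add_right, measure_preimage_add_right]
  have hkL : volume ({k} + L) = volume L := by
    simp only [Set.singleton_add, Set.image_add_left, measure_preimage_add]
  have hinter : volume ((K + {l}) ∩ ({k} + L)) = 0 := by
    refine measure_mono_null (t := {k + l}) ?_ Real.volume_singleton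
    rintro _ ⟨⟨x, hx, _, rfl, rfl⟩, ⟨_, rfl, y, hy, hxy⟩⟩
    have hxk := hk hx
    have hly := hl hy
    simp only [Set.mem_singleton_iff] at hxy ⊢
    linarith
  calc volume K + volume L
      = volume ((K + {l}) ∪ ({k} + L)) := by
        rw [← hKl, ← hkL, ← measure_union_add_inter _ (isCompact_singleton.add hL).measurableSet,
          hinter, add_zero]
    _ ≤ volume (K + L) := by
        refine measure_mono (Set.union_subset ?_ ?_) <;> gcongr <;> simpa

lemma volume_add_volume_le_volume_add {A B : Set ℝ} (hA : MeasurableSet A)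
    (hB : MeasurableSet B) (hA₀ : A.Nonempty) (hB₀ : B.Nonempty) :
    volume A + volume B ≤ volume (A + B) := by
  obtain ⟨a, ha⟩ := hA₀
  obtain ⟨b, hb⟩ := hB₀
  rw [hA.measure_eq_iSup_isCompact, hB.measure_eq_iSup_isCompact]
  simp_rw [iSup_and']
  refine ENNReal.biSup_add_biSup_le' ⟨∅, by simp⟩ ⟨∅, by simp⟩
    fun K ⟨hKA, hK⟩ L ⟨hLB, hL⟩ ↦ ?_
  calc volume K + volume L ≤ volume (insert a K) + volume (insert b L) := by
        gcongr <;> exact Set.subset_insert _ _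
    _ ≤ volume (insert a K + insert b L) :=
        volume_add_volume_le_volume_add_of_isCompact (hK.insert a) (hL.insert b)
          (Set.insert_nonempty _ _) (Set.insert_nonempty _ _)
    _ ≤ volume (A + B) := by
        gcongr
        exacts [Set.insert_subset ha hKA, Set.insert_subset hb hLB]

lemma lintegral_eq_lintegral_measure_ofReal_lt {α : Type*} [MeasurableSpace α] (μ : Measure α)
    [SFinite μ] {f : α → ℝ≥0∞} (hf : Measurable f) :
    ∫⁻ x, f x ∂μ = ∫⁻ t in Set.Ioi (0 : ℝ), μ {x | ENNReal.ofReal t < f x} := by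
  have hvolume (y : ℝ≥0∞) : volume ({t : ℝ | ENNReal.ofReal t < y} ∩ Set.Ioi 0) = y := by
    rcases eq_or_ne y ∞ with rfl | hy
    · simp
    · have : {t : ℝ | ENNReal.ofReal t < y} ∩ Set.Ioi 0 = Set.Ioo 0 y.toReal := by
        ext t
        simp only [Set.mem_inter_iff, Set.mem_ofPred_eq, Set.mem_Ioi, Set.mem_Ioo]
        rw [and_comm]
        exact and_congr_right fun ht ↦ ENNReal.ofReal_lt_iff_lt_toReal (le_of_lt ht) hy
      rw [this, Real.volume_Ioo, sub_zero, ENNReal.ofReal_toReal hy]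
  have hmeas : MeasurableSet {p : α × ℝ | ENNReal.ofReal p.2 < f p.1} :=
    measurableSet_lt (by fun_prop) (by fun_prop)
  calc ∫⁻ x, f x ∂μ
      = ∫⁻ x, volume.restrict (Set.Ioi 0) {t : ℝ | ENNReal.ofReal t < f x} ∂μ := by
        refine lintegral_congr fun x ↦ ?_
        rw [Measure.restrict_apply (measurableSet_lt (by fun_prop) (by fun_prop)), hvolume]
    _ = (μ.prod (volume.restrict (Set.Ioi 0))) {p : α × ℝ | ENNReal.ofReal p.2 < f p.1} :=
        (Measure.prod_apply hmeas).symm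
    _ = ∫⁻ t in Set.Ioi (0 : ℝ), μ {x | ENNReal.ofReal t < f x} :=
        Measure.prod_apply_symm hmeas

lemma rpow_mul_rpow_le_ofReal_mul_add_ofReal_mul {a b : ℝ} (ha : 0 < a) (hb : 0 < b)
    (hab : a + b = 1) (u v : ℝ≥0∞) :
    u ^ a * v ^ b ≤ ENNReal.ofReal a * u + ENNReal.ofReal b * v := by
  refine (ENNReal.young_inequality _ _ (.inv_inv ha hb hab)).trans_eq ?_
  rw [ENNReal.rpow_rpow_inv ha.ne', ENNReal.rpow_rpow_inv hb.ne', ENNReal.ofReal_inv_of_pos ha,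
    ENNReal.ofReal_inv_of_pos hb, div_eq_mul_inv, div_eq_mul_inv, inv_inv, inv_inv, mul_comm u,
    mul_comm v]

variable {a b : ℝ} {f g h : ℝ → ℝ≥0∞}

lemma ofReal_mul_volume_add_le {A B : Set ℝ} (ha : 0 < a) (hb : 0 < b) (hA : MeasurableSet A)
    (hB : MeasurableSet B) (hA₀ : A.Nonempty) (hB₀ : B.Nonempty) :
    ENNReal.ofReal a * volume A + ENNReal.ofReal b * volume B ≤ volume (a • A + b • B) := by
  have hsmul {c : ℝ} (hc : 0 < c) (S : Set ℝ) : volume (c • S) = ENNReal.ofReal c * volume S := by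
    rw [Measure.addHaar_smul, Module.finrank_self, pow_one, abs_of_pos hc]
  rw [← hsmul ha, ← hsmul hb]
  exact volume_add_volume_le_volume_add (hA.const_smul₀ a) (hB.const_smul₀ b) hA₀.smul_set
    hB₀.smul_set

lemma ofReal_mul_lintegral_add_le_of_iSup_eq_one (ha : 0 < a) (hb : 0 < b) (hab : a + b = 1)
    (hf : Measurable f) (hg : Measurable g) (hh : Measurable h) (hf₁ : ⨆ x, f x = 1)
    (hg₁ : ⨆ x, g x = 1) (hfgh : ∀ x y, f x ^ a * g y ^ b ≤ h (a • x + b • y)) :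
    ENNReal.ofReal a * (∫⁻ x, f x) + ENNReal.ofReal b * (∫⁻ x, g x) ≤ ∫⁻ x, h x := by
  have hanti (k : ℝ → ℝ≥0∞) : Antitone fun t ↦ volume {x | ENNReal.ofReal t < k x} :=
    fun s t hst ↦ measure_mono fun x hx ↦ (ENNReal.ofReal_le_ofReal hst).trans_lt hx
  rw [lintegral_eq_lintegral_measure_ofReal_lt _ hf, lintegral_eq_lintegral_measure_ofReal_lt _ hg,
    lintegral_eq_lintegral_measure_ofReal_lt _ hh, ← lintegral_const_mul _ (hanti f).measurable,
    ← lintegral_const_mul _ (hanti g).measurable,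
    ← lintegral_add_left ((hanti f).measurable.const_mul _)]
  refine lintegral_mono fun t ↦ ?_
  rcases lt_or_ge (ENNReal.ofReal t) 1 with ht | ht
  · have hnonempty {k : ℝ → ℝ≥0∞} (hk : ⨆ x, k x = 1) : {x | ENNReal.ofReal t < k x}.Nonempty :=
      (lt_iSup_iff.1 (hk ▸ ht)).imp fun x hx ↦ hx
    refine (ofReal_mul_volume_add_le ha hb (measurableSet_lt measurable_const hf)
      (measurableSet_lt measurable_const hg) (hnonempty hf₁) (hnonempty hg₁)).trans
      (measure_mono ?_)
    rintro _ ⟨_, ⟨x, hx, rfl⟩, _, ⟨y, hy, rfl⟩, rfl⟩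
    calc ENNReal.ofReal t = ENNReal.ofReal t ^ a * ENNReal.ofReal t ^ b := by
          rw [← ENNReal.rpow_add_of_nonneg _ _ ha.le hb.le, hab, ENNReal.rpow_one]
      _ < f x ^ a * g y ^ b :=
          ENNReal.mul_lt_mul (ENNReal.rpow_lt_rpow hx ha) (ENNReal.rpow_lt_rpow hy hb)
      _ ≤ h (a • x + b • y) := hfgh x y
  · have hempty {k : ℝ → ℝ≥0∞} (hk : ⨆ x, k x = 1) : {x | ENNReal.ofReal t < k x} = ∅ :=
      Set.eq_empty_of_forall_notMem fun x hx ↦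
        not_lt.2 ((le_iSup k x).trans (hk.trans_le ht)) hx
    simp only [hempty hf₁, hempty hg₁, measure_empty, mul_zero, add_zero, zero_le]

lemma lintegral_rpow_mul_le_of_iSup_ne_top (ha : 0 < a) (hb : 0 < b) (hab : a + b = 1)
    (hf : Measurable f) (hg : Measurable g) (hh : Measurable h) (hfb : ⨆ x, f x ≠ ∞)
    (hgb : ⨆ x, g x ≠ ∞) (hfgh : ∀ x y, f x ^ a * g y ^ b ≤ h (a • x + b • y)) :
    (∫⁻ x, f x) ^ a * (∫⁻ x, g x) ^ b ≤ ∫⁻ x, h x := by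
  set M := ⨆ x, f x
  set N := ⨆ x, g x
  rcases eq_or_ne M 0 with hM | hM
  · simp [ENNReal.iSup_eq_zero.1 hM, ENNReal.zero_rpow_of_pos ha]
  rcases eq_or_ne N 0 with hN | hN
  · simp [ENNReal.iSup_eq_zero.1 hN, ENNReal.zero_rpow_of_pos hb]
  have hMa : M ^ a ≠ 0 ∧ M ^ a ≠ ∞ := by simp [M, *, ha.not_gt]
  have hNb : N ^ b ≠ 0 ∧ N ^ b ≠ ∞ := by simp [*, hb.not_gt]
  set c := M ^ a * N ^ b
  have hc : c ≠ 0 := mul_ne_zero hMa.1 hNb.1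
  have hc' : c ≠ ∞ := ENNReal.mul_ne_top hMa.2 hNb.2
  have hscale (u v : ℝ≥0∞) : (M⁻¹ * u) ^ a * (N⁻¹ * v) ^ b = c⁻¹ * (u ^ a * v ^ b) := by
    rw [ENNReal.mul_rpow_of_nonneg _ _ ha.le, ENNReal.mul_rpow_of_nonneg _ _ hb.le,
      ENNReal.mul_inv (.inl hMa.1) (.inl hMa.2), ENNReal.inv_rpow, ENNReal.inv_rpow]
    ring
  have hnormalized : c⁻¹ * ((∫⁻ x, f x) ^ a * (∫⁻ x, g x) ^ b) ≤ c⁻¹ * ∫⁻ x, h x := by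
    rw [← hscale, ← lintegral_const_mul _ hf, ← lintegral_const_mul _ hg,
      ← lintegral_const_mul _ hh]
    refine (rpow_mul_rpow_le_ofReal_mul_add_ofReal_mul ha hb hab _ _).trans ?_
    refine ofReal_mul_lintegral_add_le_of_iSup_eq_one ha hb hab (hf.const_mul _) (hg.const_mul _)
      (hh.const_mul _) ?_ ?_ fun x y ↦ ?_
    · rw [← ENNReal.mul_iSup, ENNReal.inv_mul_cancel hM hfb]
    · rw [← ENNReal.mul_iSup, ENNReal.inv_mul_cancel hN hgb]
    · rw [hscale]
      gcongr
      exact hfgh x y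
  exact (ENNReal.mul_le_mul_iff_right (ENNReal.inv_ne_zero.2 hc') (ENNReal.inv_ne_top.2 hc)).1
    hnormalized

lemma tendsto_lintegral_min_natCast {α : Type*} [MeasurableSpace α] (μ : Measure α)
    {f : α → ℝ≥0∞} (hf : Measurable f) :
    Tendsto (fun n : ℕ ↦ ∫⁻ x, min (f x) n ∂μ) atTop (𝓝 (∫⁻ x, f x ∂μ)) := by
  refine lintegral_tendsto_of_tendsto_of_monotone
    (fun n ↦ (hf.min measurable_const).aemeasurable)
    (.of_forall fun x m n hmn ↦ min_le_min_left _ (Nat.cast_le.2 hmn)) (.of_forall fun x ↦ ?_)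
  simpa using (tendsto_const_nhds (x := f x)).min ENNReal.tendsto_nat_nhds_top

end PrekopaLeindlerReal

/-- A measure `μ` on a real vector space satisfies the Prékopa–Leindler inequality. By the theorem
of Prékopa and Leindler, Lebesgue measure and all log-concave measures do; it is the only geometric
property of Gaussian measures that enters the proof of Anderson's inequality. -/
def IsPrekopaLeindler {E : Type*} [AddCommGroup E] [Module ℝ E] [MeasurableSpace E]
    (μ : Measure E) : Prop :=
  ∀ ⦃a b : ℝ⦄, 0 < a → 0 < b → a + b = 1 →
    ∀ ⦃f g h : E → ℝ≥0∞⦄, Measurable f → Measurable g → Measurable h →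
      (∀ x y, f x ^ a * g y ^ b ≤ h (a • x + b • y)) →
        (∫⁻ x, f x ∂μ) ^ a * (∫⁻ x, g x ∂μ) ^ b ≤ ∫⁻ x, h x ∂μ

namespace IsPrekopaLeindler

protected lemma volume : IsPrekopaLeindler (volume : Measure ℝ) := by
  intro a b ha hb hab f g h hf hg hh hfgh
  rcases eq_or_ne (∫⁻ x, f x) 0 with hf₀ | hf₀
  · simp [hf₀, ENNReal.zero_rpow_of_pos ha]
  rcases eq_or_ne (∫⁻ x, g x) 0 with hg₀ | hg₀
  · simp [hg₀, ENNReal.zero_rpow_of_pos hb]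
  have hlim {k : ℝ → ℝ≥0∞} (hk : Measurable k) (r : ℝ) :
      Tendsto (fun n : ℕ ↦ (∫⁻ x, min (k x) n) ^ r) atTop (𝓝 ((∫⁻ x, k x) ^ r)) :=
    (ENNReal.continuous_rpow_const.tendsto _).comp (tendsto_lintegral_min_natCast volume hk)
  have hbdd (k : ℝ → ℝ≥0∞) (n : ℕ) : ⨆ x, min (k x) n ≠ ∞ :=
    ne_top_of_le_ne_top (ENNReal.natCast_ne_top n) (iSup_le fun x ↦ min_le_right _ _)
  refine le_of_tendsto' (ENNReal.Tendsto.mul (hlim hf a) (.inl ?_) (hlim hg b) (.inl ?_))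
    fun n ↦ lintegral_rpow_mul_le_of_iSup_ne_top ha hb hab (hf.min measurable_const)
      (hg.min measurable_const) hh (hbdd f n) (hbdd g n) fun x y ↦ le_trans ?_ (hfgh x y)
  · simp [hf₀, ha.le]
  · simp [hg₀, hb.le]
  · gcongr <;> exact min_le_left _ _

variable {E F : Type*} [AddCommGroup E] [Module ℝ E] [MeasurableSpace E] [AddCommGroup F]
  [Module ℝ F] [MeasurableSpace F] {μ : Measure E} {ν : Measure F}

protected lemma dirac (x : E) : IsPrekopaLeindler (Measure.dirac x) := by
  intro a b _ _ hab f g h hf hg hh hfgh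
  rw [lintegral_dirac' _ hf, lintegral_dirac' _ hg, lintegral_dirac' _ hh]
  simpa only [Convex.combo_self hab] using hfgh x x

lemma withDensity (hμ : IsPrekopaLeindler μ) {ρ : E → ℝ≥0∞} (hρ : Measurable ρ)
    (hρlog : ∀ ⦃a b : ℝ⦄, 0 < a → 0 < b → a + b = 1 →
      ∀ x y, ρ x ^ a * ρ y ^ b ≤ ρ (a • x + b • y)) :
    IsPrekopaLeindler (μ.withDensity ρ) := by
  intro a b ha hb hab f g h hf hg hh hfgh
  simp only [lintegral_withDensity_eq_lintegral_mul _ hρ, hf, hg, hh]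
  refine hμ ha hb hab (hρ.mul hf) (hρ.mul hg) (hρ.mul hh) fun x y ↦ ?_
  simp only [Pi.mul_apply]
  calc (ρ x * f x) ^ a * (ρ y * g y) ^ b
      = (ρ x ^ a * ρ y ^ b) * (f x ^ a * g y ^ b) := by
        rw [ENNReal.mul_rpow_of_nonneg _ _ ha.le, ENNReal.mul_rpow_of_nonneg _ _ hb.le,
          mul_mul_mul_comm]
    _ ≤ ρ (a • x + b • y) * h (a • x + b • y) := mul_le_mul' (hρlog ha hb hab x y) (hfgh x y)

lemma map (hμ : IsPrekopaLeindler μ) (T : E →ᵃ[ℝ] F) (hT : Measurable T) :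
    IsPrekopaLeindler (μ.map T) := by
  intro a b ha hb hab f g h hf hg hh hfgh
  rw [lintegral_map hf hT, lintegral_map hg hT, lintegral_map hh hT]
  refine hμ ha hb hab (hf.comp hT) (hg.comp hT) (hh.comp hT) fun x y ↦ ?_
  rw [Convex.combo_affine_apply hab]
  exact hfgh (T x) (T y)

lemma prod [SFinite ν] (hμ : IsPrekopaLeindler μ) (hν : IsPrekopaLeindler ν) :
    IsPrekopaLeindler (μ.prod ν) := by
  intro a b ha hb hab f g h hf hg hh hfgh
  rw [lintegral_prod _ hf.aemeasurable, lintegral_prod _ hg.aemeasurable,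
    lintegral_prod _ hh.aemeasurable]
  refine hμ ha hb hab hf.lintegral_prod_right' hg.lintegral_prod_right' hh.lintegral_prod_right'
    fun x y ↦ ?_
  exact hν ha hb hab (hf.comp measurable_prodMk_left) (hg.comp measurable_prodMk_left)
    (hh.comp measurable_prodMk_left) fun z w ↦ hfgh (x, z) (y, w)

protected lemma pi : ∀ {n : ℕ} {E : Fin n → Type*} [∀ i, AddCommGroup (E i)] [∀ i, Module ℝ (E i)]
    [∀ i, MeasurableSpace (E i)] {μ : ∀ i, Measure (E i)} [∀ i, SigmaFinite (μ i)],
    (∀ i, IsPrekopaLeindler (μ i)) → IsPrekopaLeindler (Measure.pi μ)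
  | 0, _, _, _, _, μ, _, _ => by
    rw [Measure.pi_of_empty]
    exact .dirac _
  | n + 1, E, _, _, _, μ, _, hμ => by
    have hcons : ⇑(MeasurableEquiv.piFinSuccAbove E 0).symm =
        (Fin.consLinearEquiv ℝ E).toLinearMap.toAffineMap := by
      ext p i
      cases i using Fin.cases <;> rfl
    have hmeas := (MeasurableEquiv.piFinSuccAbove E 0).symm.measurable
    rw [← (measurePreserving_piFinSuccAbove μ 0).symm.map_eq, hcons]
    exact ((hμ 0).prod (IsPrekopaLeindler.pi fun i ↦ hμ i.succ)).map _ (hcons ▸ hmeas)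

end IsPrekopaLeindler

lemma gaussianPDF_rpow_mul_rpow_le (m : ℝ) (v : ℝ≥0) {a b : ℝ} (ha : 0 < a) (hb : 0 < b)
    (hab : a + b = 1) (x y : ℝ) :
    gaussianPDF m v x ^ a * gaussianPDF m v y ^ b ≤ gaussianPDF m v (a * x + b * y) := by
  have hsq : (a * x + b * y - m) ^ 2 ≤ a * (x - m) ^ 2 + b * (y - m) ^ 2 := by
    obtain rfl : b = 1 - a := by linarith
    nlinarith [mul_nonneg (mul_nonneg ha.le hb.le) (sq_nonneg (x - y))]
  have hexp : -(x - m) ^ 2 / (2 * v) * a + -(y - m) ^ 2 / (2 * v) * b ≤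
      -(a * x + b * y - m) ^ 2 / (2 * v) := by
    rw [div_mul_eq_mul_div, div_mul_eq_mul_div, ← add_div]
    gcongr
    linarith
  simp only [gaussianPDF]
  rw [ENNReal.ofReal_rpow_of_nonneg (gaussianPDFReal_nonneg m v x) ha.le,
    ENNReal.ofReal_rpow_of_nonneg (gaussianPDFReal_nonneg m v y) hb.le,
    ← ENNReal.ofReal_mul (Real.rpow_nonneg (gaussianPDFReal_nonneg m v x) a)]
  refine ENNReal.ofReal_le_ofReal ?_
  simp only [gaussianPDFReal]
  set c := (√(2 * Real.pi * v))⁻¹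
  have hc : 0 ≤ c := by positivity
  calc (c * Real.exp (-(x - m) ^ 2 / (2 * v))) ^ a * (c * Real.exp (-(y - m) ^ 2 / (2 * v))) ^ b
      = c * Real.exp (-(x - m) ^ 2 / (2 * v) * a + -(y - m) ^ 2 / (2 * v) * b) := by
        rw [Real.mul_rpow hc (Real.exp_nonneg _), Real.mul_rpow hc (Real.exp_nonneg _),
          mul_mul_mul_comm, ← Real.rpow_add_of_nonneg hc ha.le hb.le, hab, Real.rpow_one,
          ← Real.exp_mul, ← Real.exp_mul, ← Real.exp_add]
    _ ≤ c * Real.exp (-(a * x + b * y - m) ^ 2 / (2 * v)) := by gcongr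

namespace IsPrekopaLeindler

protected lemma gaussianReal (m : ℝ) (v : ℝ≥0) : IsPrekopaLeindler (gaussianReal m v) := by
  rcases eq_or_ne v 0 with rfl | hv
  · rw [gaussianReal_zero_var]
    exact .dirac m
  · rw [gaussianReal_of_var_ne_zero m hv]
    exact IsPrekopaLeindler.volume.withDensity (measurable_gaussianPDF m v)
      fun a b ha hb hab ↦ gaussianPDF_rpow_mul_rpow_le m v ha hb hab

protected lemma stdGaussian (E : Type*) [NormedAddCommGroup E] [InnerProductSpace ℝ E]
    [FiniteDimensional ℝ E] [MeasurableSpace E] [BorelSpace E] :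
    IsPrekopaLeindler (stdGaussian E) := by
  have hmeas : Measurable (Fintype.linearCombination ℝ (stdOrthonormalBasis ℝ E)).toAffineMap := by
    change Measurable fun x : Fin (Module.finrank ℝ E) → ℝ ↦ ∑ i, x i • stdOrthonormalBasis ℝ E i
    fun_prop
  exact (IsPrekopaLeindler.pi fun _ ↦ .gaussianReal 0 1).map _ hmeas

open scoped MatrixOrder in
protected lemma multivariateGaussian {ι : Type*} [Fintype ι] [DecidableEq ι]
    (m : EuclideanSpace ℝ ι) (S : Matrix ι ι ℝ) : IsPrekopaLeindler (multivariateGaussian m S) := by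
  let T := Matrix.toEuclideanCLM (𝕜 := ℝ) (CFC.sqrt S)
  exact (IsPrekopaLeindler.stdGaussian (EuclideanSpace ℝ ι)).map
    (AffineMap.const ℝ _ m + T.toLinearMap.toAffineMap) (T.measurable.const_add m)

section Anderson

open scoped Pointwise

variable {E : Type*} [AddCommGroup E] [Module ℝ E] [MeasurableSpace E] {μ : Measure E}
  {A B C : Set E}

lemma measure_rpow_mul_measure_rpow_le (hμ : IsPrekopaLeindler μ) {a b : ℝ} (ha : 0 < a)
    (hb : 0 < b) (hab : a + b = 1) (hA : MeasurableSet A) (hB : MeasurableSet B)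
    (hC : MeasurableSet C) (hABC : a • A + b • B ⊆ C) : μ A ^ a * μ B ^ b ≤ μ C := by
  simp only [← lintegral_indicator_one, hA, hB, hC]
  refine hμ ha hb hab (measurable_one.indicator hA) (measurable_one.indicator hB)
    (measurable_one.indicator hC) fun x y ↦ ?_
  by_cases hx : x ∈ A
  · by_cases hy : y ∈ B
    · have hxy : a • x + b • y ∈ C :=
        hABC (Set.add_mem_add (Set.smul_mem_smul_set hx) (Set.smul_mem_smul_set hy))
      simp [hx, hy, hxy]
    · simp [hy, hb]
  · simp [hx, ha]

theorem measure_preimage_add_le [MeasurableAdd E] [MeasurableNeg E] [μ.IsNegInvariant]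
    (hμ : IsPrekopaLeindler μ) (hB : MeasurableSet B) (hBconv : Convex ℝ B) (hBsym : B = -B)
    (z : E) :
    μ ((z + ·) ⁻¹' B) ≤ μ B := by
  have hpre : (-z + ·) ⁻¹' B = -((z + ·) ⁻¹' B) := by
    ext x
    nth_rw 1 [hBsym]
    simp only [Set.mem_preimage, Set.mem_neg, neg_add, neg_neg]
  have hneg : μ ((-z + ·) ⁻¹' B) = μ ((z + ·) ⁻¹' B) := by
    rw [hpre, Measure.measure_neg]
  have hsub : (1 / 2 : ℝ) • ((z + ·) ⁻¹' B) + (1 / 2 : ℝ) • ((-z + ·) ⁻¹' B) ⊆ B := by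
    rintro _ ⟨_, ⟨x, hx, rfl⟩, _, ⟨y, hy, rfl⟩, rfl⟩
    convert hBconv hx hy (a := 1 / 2) (b := 1 / 2) (by positivity) (by positivity) (by norm_num)
      using 1
    module
  have h := hμ.measure_rpow_mul_measure_rpow_le (by positivity) (by positivity) (by norm_num)
    (measurable_const_add z hB) (measurable_const_add (-z) hB) hB hsub
  rwa [hneg, ← ENNReal.rpow_add_of_nonneg _ _ (by positivity) (by positivity), add_halves,
    ENNReal.rpow_one] at h

theorem conv_apply_le [MeasurableAdd₂ E] [MeasurableNeg E] [μ.IsNegInvariant] [SFinite μ]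
    (hμ : IsPrekopaLeindler μ) (ρ : Measure E) [IsProbabilityMeasure ρ] (hB : MeasurableSet B)
    (hBconv : Convex ℝ B) (hBsym : B = -B) : (ρ ∗ μ) B ≤ μ B := by
  calc (ρ ∗ μ) B = ∫⁻ z, μ ((z + ·) ⁻¹' B) ∂ρ := by
        rw [← lintegral_indicator_one hB, Measure.lintegral_conv (measurable_one.indicator hB)]
        refine lintegral_congr fun z ↦ ?_
        rw [← lintegral_indicator_one (measurable_const_add z hB)]
        rfl
    _ ≤ ∫⁻ _, μ B ∂ρ := lintegral_mono fun z ↦ hμ.measure_preimage_add_le hB hBconv hBsym z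
    _ = μ B := by rw [lintegral_const, measure_univ, mul_one]

end Anderson

end IsPrekopaLeindler

section EuclideanGaussian

lemma isNegInvariant_of_isGaussian {E : Type*} [NormedAddCommGroup E] [InnerProductSpace ℝ E]
    [CompleteSpace E] [SecondCountableTopology E] [MeasurableSpace E] [BorelSpace E]
    {μ : Measure E} [IsGaussian μ] (hμ : μ[id] = 0) : μ.IsNegInvariant where
  neg_eq_self := by
    have hneg : μ.neg = μ.map ((-1 : ℝ) • ·) := by simp only [Measure.neg, neg_one_smul]
    rw [hneg]
    refine Measure.ext_of_charFun (funext fun t ↦ ?_)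
    rw [charFun_map_smul, IsGaussian.charFun_eq', IsGaussian.charFun_eq', hμ]
    simp

variable {ι : Type*} [Fintype ι] {μ ν : Measure (EuclideanSpace ℝ ι)}

lemma exists_covarianceBilin_multivariateGaussian_eq [DecidableEq ι] (m : EuclideanSpace ℝ ι)
    {f : EuclideanSpace ℝ ι →L[ℝ] EuclideanSpace ℝ ι →L[ℝ] ℝ} (hf : f.toBilinForm.IsPosSemidef) :
    ∃ S : Matrix ι ι ℝ, covarianceBilin (multivariateGaussian m S) = f := by
  let e := (EuclideanSpace.basisFun ι ℝ).toBasis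
  let S := LinearMap.toMatrix₂ e e f.toBilinForm
  have hS : S.PosSemidef := (LinearMap.isPosSemidef_iff_posSemidef_toMatrix e).1
    (LinearMap.BilinForm.isPosSemidef_iff.1 hf)
  refine ⟨S, (ContinuousLinearMap.toBilinForm_inj _ _).1
    (LinearMap.BilinForm.ext_basis e fun i j ↦ ?_)⟩
  rw [ContinuousLinearMap.toBilinForm_apply, covarianceBilin_multivariateGaussian hS]
  simp [e, S]

lemma isPrekopaLeindler_of_isGaussian {E : Type*} [AddCommGroup E] [Module ℝ E]
    [TopologicalSpace E] [IsTopologicalAddGroup E] [ContinuousSMul ℝ E] [T2Space E]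
    [FiniteDimensional ℝ E] [MeasurableSpace E] [BorelSpace E] (μ : Measure E) [IsGaussian μ] :
    IsPrekopaLeindler μ := by
  let e : E ≃L[ℝ] EuclideanSpace ℝ (Fin (Module.finrank ℝ E)) := toEuclidean
  let ν := μ.map e
  have : IsGaussian ν :=
    isGaussian_map_of_measurable (L := e.toContinuousLinearMap) e.continuous.measurable
  obtain ⟨S, hS⟩ := exists_covarianceBilin_multivariateGaussian_eq (ν[id])
    (isPosSemidef_covarianceBilin (μ := ν))
  have hν : IsPrekopaLeindler ν := by
    rw [IsGaussian.ext integral_id_multivariateGaussian'.symm hS.symm]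
    exact .multivariateGaussian _ _
  have hμν : ν.map e.symm = μ := by
    rw [Measure.map_map e.symm.continuous.measurable e.continuous.measurable,
      e.symm_comp_self, Measure.map_id]
  exact hμν ▸ hν.map e.symm.toLinearMap.toAffineMap e.symm.continuous.measurable

lemma exists_isGaussian_conv_eq [IsGaussian μ] [IsGaussian ν]
    (hle : ∀ x, covarianceBilin μ x x ≤ covarianceBilin ν x x) :
    ∃ ρ : Measure (EuclideanSpace ℝ ι), IsGaussian ρ ∧ ρ ∗ μ = ν := by
  classical
  have hpos : (covarianceBilin ν - covarianceBilin μ).toBilinForm.IsPosSemidef :=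
    { eq x y := by simp [covarianceBilin_comm]
      nonneg x := by simpa using hle x }
  obtain ⟨S, hS⟩ := exists_covarianceBilin_multivariateGaussian_eq (ν[id] - μ[id]) hpos
  refine ⟨multivariateGaussian (ν[id] - μ[id]) S, inferInstance,
    Measure.ext_of_charFun (funext fun t ↦ ?_)⟩
  rw [charFun_conv, IsGaussian.charFun_eq', IsGaussian.charFun_eq', IsGaussian.charFun_eq', hS,
    integral_id_multivariateGaussian', ← Complex.exp_add]
  congr 1
  simp only [sub_apply, inner_sub_right]
  push_cast
  ring

theorem measure_le_of_covarianceBilin_le [IsGaussian μ] [IsGaussian ν] (hμ : μ[id] = 0)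
    (hle : ∀ x, covarianceBilin μ x x ≤ covarianceBilin ν x x) {B : Set (EuclideanSpace ℝ ι)}
    (hB : MeasurableSet B) (hBconv : Convex ℝ B) (hBsym : B = -B) : ν B ≤ μ B := by
  obtain ⟨ρ, _, rfl⟩ := exists_isGaussian_conv_eq hle
  have := isNegInvariant_of_isGaussian hμ
  exact (isPrekopaLeindler_of_isGaussian μ).conv_apply_le ρ hB hBconv hBsym

end EuclideanGaussian

/-- An `E`-valued random variable `X` is centered Gaussian if every continuous linear functional of
`X` has a centered, possibly degenerate, Gaussian law. Neither a measurable structure on `E` nor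
measurability of `X` is required. Each `φ ∘ X` is nevertheless almost everywhere measurable, since
otherwise `P.map (φ ∘ X)` would be the junk value `0`. -/
def IsCenteredGaussian {Ω E : Type*} [MeasurableSpace Ω] [TopologicalSpace E] [AddCommMonoid E]
    [Module ℝ E] (X : Ω → E) (P : Measure Ω) : Prop :=
  ∀ φ : E →L[ℝ] ℝ, ∃ v : ℝ≥0, P.map (fun ω ↦ φ (X ω)) = gaussianReal 0 v

namespace IsCenteredGaussian

variable {Ω Ω' : Type*} [MeasurableSpace Ω] [MeasurableSpace Ω'] {P : Measure Ω} {P' : Measure Ω'}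

section Functional

variable {E F : Type*} [TopologicalSpace E] [AddCommMonoid E] [Module ℝ E] [TopologicalSpace F]
  [AddCommMonoid F] [Module ℝ F] {X : Ω → E}

lemma aemeasurable (hX : IsCenteredGaussian X P) (φ : E →L[ℝ] ℝ) :
    AEMeasurable (fun ω ↦ φ (X ω)) P := by
  obtain ⟨v, hv⟩ := hX φ
  exact AEMeasurable.of_map_ne_zero (hv ▸ IsProbabilityMeasure.ne_zero _)

lemma isProbabilityMeasure (hX : IsCenteredGaussian X P) : IsProbabilityMeasure P := by
  obtain ⟨v, hv⟩ := hX 0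
  exact (Measure.isProbabilityMeasure_map_iff (hX.aemeasurable 0)).1 (hv ▸ inferInstance)

lemma integral_eq_zero (hX : IsCenteredGaussian X P) (φ : E →L[ℝ] ℝ) :
    ∫ ω, φ (X ω) ∂P = 0 := by
  obtain ⟨v, hv⟩ := hX φ
  calc ∫ ω, φ (X ω) ∂P = ∫ x, x ∂(P.map fun ω ↦ φ (X ω)) :=
        (integral_map (hX.aemeasurable φ) aestronglyMeasurable_id).symm
    _ = 0 := by rw [hv, integral_id_gaussianReal]

lemma continuousLinearMap_comp (hX : IsCenteredGaussian X P) (T : E →L[ℝ] F) :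
    IsCenteredGaussian (fun ω ↦ T (X ω)) P :=
  fun φ ↦ hX (φ.comp T)

end Functional

section Euclidean

variable {ι : Type*} {X : Ω → EuclideanSpace ℝ ι} {Y : Ω' → EuclideanSpace ℝ ι}

lemma aemeasurable_euclideanSpace [Countable ι] (hX : IsCenteredGaussian X P) : AEMeasurable X P :=
  (WithLp.measurable_toLp 2 (ι → ℝ)).comp_aemeasurable
    (aemeasurable_pi_iff.2 fun i ↦ hX.aemeasurable (EuclideanSpace.proj i))

lemma isGaussian_map [Countable ι] (hX : IsCenteredGaussian X P) : IsGaussian (P.map X) := by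
  refine isGaussian_of_map_eq_gaussianReal fun φ ↦ ⟨0, ?_⟩
  rw [AEMeasurable.map_map_of_aemeasurable φ.continuous.measurable.aemeasurable
    hX.aemeasurable_euclideanSpace]
  exact hX φ

lemma integral_id_map [Fintype ι] (hX : IsCenteredGaussian X P) : (P.map X)[id] = 0 := by
  have := hX.isGaussian_map
  refine ext_inner_left ℝ fun x ↦ ?_
  rw [inner_zero_right, ← integral_inner IsGaussian.integrable_id,
    integral_map hX.aemeasurable_euclideanSpace (by fun_prop)]
  exact hX.integral_eq_zero (innerSL ℝ x)

lemma covarianceBilin_map_self [Fintype ι] (hX : IsCenteredGaussian X P)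
    (x : EuclideanSpace ℝ ι) :
    covarianceBilin (P.map X) x x = ∫ ω, innerSL ℝ x (X ω) ^ 2 ∂P := by
  have := hX.isGaussian_map
  rw [covarianceBilin_self IsGaussian.memLp_two_id,
    variance_map (by fun_prop) hX.aemeasurable_euclideanSpace]
  exact variance_of_integral_eq_zero (hX.aemeasurable (innerSL ℝ x))
    (hX.integral_eq_zero (innerSL ℝ x))

lemma measure_mem_le_of_euclideanSpace [Finite ι] (hX : IsCenteredGaussian X P)
    (hY : IsCenteredGaussian Y P')
    (hXY : ∀ φ : EuclideanSpace ℝ ι →L[ℝ] ℝ, ∫ ω, φ (X ω) ^ 2 ∂P ≤ ∫ ω, φ (Y ω) ^ 2 ∂P')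
    {B : Set (EuclideanSpace ℝ ι)} (hB : MeasurableSet B) (hBconv : Convex ℝ B)
    (hBsym : B = -B) : P' {ω | Y ω ∈ B} ≤ P {ω | X ω ∈ B} := by
  cases nonempty_fintype ι
  have := hX.isGaussian_map
  have := hY.isGaussian_map
  have hle (x : EuclideanSpace ℝ ι) :
      covarianceBilin (P.map X) x x ≤ covarianceBilin (P'.map Y) x x := by
    rw [hX.covarianceBilin_map_self, hY.covarianceBilin_map_self]
    exact hXY (innerSL ℝ x)
  have h := measure_le_of_covarianceBilin_le hX.integral_id_map hle hB hBconv hBsym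
  rwa [Measure.map_apply_of_aemeasurable hX.aemeasurable_euclideanSpace hB,
    Measure.map_apply_of_aemeasurable hY.aemeasurable_euclideanSpace hB] at h

end Euclidean

section Slabs

variable {E ι : Type*} [TopologicalSpace E] [AddCommMonoid E] [Module ℝ E] {X : Ω → E}
  {Y : Ω' → E}

lemma measure_forall_abs_le_le_of_finite [Finite ι] (hX : IsCenteredGaussian X P)
    (hY : IsCenteredGaussian Y P')
    (hXY : ∀ φ : E →L[ℝ] ℝ, ∫ ω, φ (X ω) ^ 2 ∂P ≤ ∫ ω, φ (Y ω) ^ 2 ∂P')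
    (φ : ι → E →L[ℝ] ℝ) (c : ι → ℝ) :
    P' {ω | ∀ i, |φ i (Y ω)| ≤ c i} ≤ P {ω | ∀ i, |φ i (X ω)| ≤ c i} := by
  cases nonempty_fintype ι
  let T : E →L[ℝ] EuclideanSpace ℝ ι :=
    (EuclideanSpace.equiv ι ℝ).symm.toContinuousLinearMap.comp (ContinuousLinearMap.pi φ)
  let B : Set (EuclideanSpace ℝ ι) := EuclideanSpace.equiv ι ℝ ⁻¹' Set.Icc (-c) c
  have hB (x : E) : T x ∈ B ↔ ∀ i, |φ i x| ≤ c i := by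
    simp only [abs_le, forall_and]
    rfl
  simp only [← hB]
  refine (hX.continuousLinearMap_comp T).measure_mem_le_of_euclideanSpace
    (hY.continuousLinearMap_comp T) (fun ψ ↦ hXY (ψ.comp T))
    ((EuclideanSpace.equiv ι ℝ).continuous.measurable measurableSet_Icc)
    ((convex_Icc _ _).linear_preimage (EuclideanSpace.equiv ι ℝ).toLinearMap) ?_
  ext x
  simp only [B, Set.mem_neg, Set.mem_preimage, map_neg, Set.neg_mem_Icc_iff, neg_neg]

lemma measure_forall_abs_le_eq_iInf (hX : IsCenteredGaussian X P) (φ : ℕ → E →L[ℝ] ℝ)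
    (c : ℕ → ℝ) :
    P {ω | ∀ i, |φ i (X ω)| ≤ c i} = ⨅ n : ℕ, P {ω | ∀ i : Set.Iic n, |φ i (X ω)| ≤ c i} := by
  have := hX.isProbabilityMeasure
  have h := measure_iInter_eq_iInf_measure_iInter_le (μ := P)
    (f := fun i ↦ {ω | |φ i (X ω)| ≤ c i})
    (fun i ↦ nullMeasurableSet_le (hX.aemeasurable (φ i)).abs aemeasurable_const)
    ⟨0, measure_ne_top _ _⟩
  simpa only [← Set.ofPred_forall, Subtype.forall, Set.mem_Iic] using h

theorem measure_forall_abs_le_le (hX : IsCenteredGaussian X P) (hY : IsCenteredGaussian Y P')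
    (hXY : ∀ φ : E →L[ℝ] ℝ, ∫ ω, φ (X ω) ^ 2 ∂P ≤ ∫ ω, φ (Y ω) ^ 2 ∂P')
    (φ : ℕ → E →L[ℝ] ℝ) (c : ℕ → ℝ) :
    P' {ω | ∀ i, |φ i (Y ω)| ≤ c i} ≤ P {ω | ∀ i, |φ i (X ω)| ≤ c i} := by
  rw [hX.measure_forall_abs_le_eq_iInf, hY.measure_forall_abs_le_eq_iInf]
  exact iInf_mono fun n ↦ hX.measure_forall_abs_le_le_of_finite hY hXY _ _

end Slabs

end IsCenteredGaussian

section ClosedConvex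

variable {E : Type*} [TopologicalSpace E] [AddCommGroup E] [Module ℝ E] [IsTopologicalAddGroup E]
  [ContinuousSMul ℝ E] [LocallyConvexSpace ℝ E] {C S : Set E}

lemma exists_forall_abs_le_and_lt (hCclosed : IsClosed C) (hCconv : Convex ℝ C) (hCsym : C = -C)
    {x : E} (hx : x ∉ C) :
    ∃ (φ : E →L[ℝ] ℝ) (c : ℝ), (∀ y ∈ C, |φ y| ≤ c) ∧ c < |φ x| := by
  obtain ⟨φ, c, hφC, hφx⟩ := geometric_hahn_banach_closed_point hCconv hCclosed hx
  refine ⟨φ, c, fun y hy ↦ abs_le'.2 ⟨(hφC y hy).le, ?_⟩, hφx.trans_le (le_abs_self _)⟩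
  rw [hCsym] at hy
  simpa only [map_neg] using (hφC (-y) hy).le

lemma exists_forall_mem_iff_forall_abs_le [PseudoMetrizableSpace E] (hS : IsSeparable S)
    (hCclosed : IsClosed C) (hCconv : Convex ℝ C) (hCsym : C = -C) :
    ∃ (φ : ℕ → E →L[ℝ] ℝ) (c : ℕ → ℝ), ∀ x ∈ S, x ∈ C ↔ ∀ n, |φ n x| ≤ c n := by
  have hsep (x : E) : ∃ (φ : E →L[ℝ] ℝ) (c : ℝ), (∀ y ∈ C, |φ y| ≤ c) ∧ (x ∉ C → c < |φ x|) := by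
    by_cases hx : x ∈ C
    · exact ⟨0, 0, by simp, fun h ↦ absurd hx h⟩
    · obtain ⟨φ, c, hφC, hφx⟩ := exists_forall_abs_le_and_lt hCclosed hCconv hCsym hx
      exact ⟨φ, c, hφC, fun _ ↦ hφx⟩
  choose φ c hφC hφ using hsep
  have := hS.secondCountableTopology
  obtain ⟨T, -, hT, hTU⟩ := isOpen_biUnion_countable Set.univ
    (fun x ↦ {s : S | c x < |φ x s|}) fun x _ ↦ isOpen_lt (by fun_prop) (by fun_prop)
  obtain ⟨e, he⟩ := (hT.insert 0).exists_eq_range (Set.insert_nonempty 0 T)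
  refine ⟨fun n ↦ φ (e n), fun n ↦ c (e n), fun x hx ↦ ⟨fun hxC n ↦ hφC _ x hxC, fun h ↦ ?_⟩⟩
  by_contra hxC
  have hxU : (⟨x, hx⟩ : S) ∈ ⋃ y ∈ T, {s : S | c y < |φ y s|} :=
    hTU ▸ Set.mem_biUnion (Set.mem_univ x) (hφ x hxC)
  obtain ⟨y, hyT, hy⟩ := Set.mem_iUnion₂.1 hxU
  obtain ⟨n, rfl⟩ : y ∈ Set.range e := he ▸ Set.mem_insert_of_mem _ hyT
  exact (h n).not_gt hy

end ClosedConvex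

lemma measure_notMem_eq_one_sub {Ω E : Type*} [MeasurableSpace Ω] [TopologicalSpace E]
    [PseudoMetrizableSpace E] {P : Measure Ω} [IsProbabilityMeasure P] {X : Ω → E}
    (hX : AEStronglyMeasurable X P) {C : Set E} (hC : IsClosed C) :
    P {ω | X ω ∉ C} = 1 - P {ω | X ω ∈ C} := by
  borelize E
  exact prob_compl_eq_one_sub₀ (hX.aemeasurable.nullMeasurable hC.measurableSet)

theorem stmt13_general {Ω₁ Ω₂ E : Type*} [MeasurableSpace Ω₁] [MeasurableSpace Ω₂]
    [TopologicalSpace E] [AddCommGroup E] [Module ℝ E] [IsTopologicalAddGroup E]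
    [ContinuousSMul ℝ E] [LocallyConvexSpace ℝ E] [PseudoMetrizableSpace E]
    {P₁ : Measure Ω₁} {P₂ : Measure Ω₂} {X₁ : Ω₁ → E} {X₂ : Ω₂ → E}
    (hX₁meas : AEStronglyMeasurable X₁ P₁) (hX₂meas : AEStronglyMeasurable X₂ P₂)
    (hX₁gauss : IsCenteredGaussian X₁ P₁) (hX₂gauss : IsCenteredGaussian X₂ P₂)
    (hdom : ∀ φ : E →L[ℝ] ℝ, ∫ ω, φ (X₁ ω) ^ 2 ∂P₁ ≤ ∫ ω, φ (X₂ ω) ^ 2 ∂P₂)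
    {C : Set E} (hCclosed : IsClosed C) (hCconv : Convex ℝ C) (hCsym : C = -C) :
    P₁ {ω | X₁ ω ∉ C} ≤ P₂ {ω | X₂ ω ∉ C} := by
  have := hX₁gauss.isProbabilityMeasure
  have := hX₂gauss.isProbabilityMeasure
  obtain ⟨S₁, hS₁, hX₁S⟩ := hX₁meas.isSeparable_ae_range
  obtain ⟨S₂, hS₂, hX₂S⟩ := hX₂meas.isSeparable_ae_range
  obtain ⟨φ, c, hC⟩ :=
    exists_forall_mem_iff_forall_abs_le (hS₁.union hS₂) hCclosed hCconv hCsym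
  have hmem : P₂ {ω | X₂ ω ∈ C} ≤ P₁ {ω | X₁ ω ∈ C} := by
    calc P₂ {ω | X₂ ω ∈ C} = P₂ {ω | ∀ n, |φ n (X₂ ω)| ≤ c n} :=
          measure_congr (hX₂S.mono fun ω hω ↦ propext (hC _ (.inr hω)))
      _ ≤ P₁ {ω | ∀ n, |φ n (X₁ ω)| ≤ c n} :=
          hX₁gauss.measure_forall_abs_le_le hX₂gauss hdom φ c
      _ = P₁ {ω | X₁ ω ∈ C} :=
          measure_congr (hX₁S.mono fun ω hω ↦ propext (hC _ (.inl hω)).symm)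
  rw [measure_notMem_eq_one_sub hX₁meas hCclosed, measure_notMem_eq_one_sub hX₂meas hCclosed]
  exact tsub_le_tsub_left hmem 1

/-- Covariance domination for Gaussian measures: if `E⟨X₁,x*⟩² ≤ E⟨X₂,x*⟩²` for
all functionals `x*`, then `P{X₁ ∉ C} ≤ P{X₂ ∉ C}` for every closed convex
symmetric set `C`. -/
theorem stmt13 {Ω₁ Ω₂ E : Type*}
    [MeasureSpace Ω₁] [IsProbabilityMeasure (ℙ : Measure Ω₁)]
    [MeasureSpace Ω₂] [IsProbabilityMeasure (ℙ : Measure Ω₂)]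
    [NormedAddCommGroup E] [NormedSpace ℝ E] [CompleteSpace E]
    (X₁ : Ω₁ → E) (X₂ : Ω₂ → E)
    (hX₁meas : StronglyMeasurable X₁) (hX₂meas : StronglyMeasurable X₂)
    (hX₁gauss : ∀ φ : E →L[ℝ] ℝ, ∃ v : ℝ≥0,
      Measure.map (fun ω => φ (X₁ ω)) ℙ = gaussianReal 0 v)
    (hX₂gauss : ∀ φ : E →L[ℝ] ℝ, ∃ v : ℝ≥0,
      Measure.map (fun ω => φ (X₂ ω)) ℙ = gaussianReal 0 v)
    (hdom : ∀ φ : E →L[ℝ] ℝ,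
      (∫ ω, (φ (X₁ ω)) ^ 2 ∂ℙ) ≤ ∫ ω, (φ (X₂ ω)) ^ 2 ∂ℙ)
    (C : Set E) (hCclosed : IsClosed C) (hCconv : Convex ℝ C) (hCsym : C = -C) :
    ℙ {ω | X₁ ω ∉ C} ≤ ℙ {ω | X₂ ω ∉ C} :=
  stmt13_general hX₁meas.aestronglyMeasurable hX₂meas.aestronglyMeasurable hX₁gauss hX₂gauss hdom
    hCclosed hCconv hCsym
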